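/- For n ≥ 1 and subsets I, J of {1,...,n-1}, the number of pairs (σ,τ) of permutations in S_n with στ equal to a fixed permutation of descent set {1,...,n-1}, Des(σ)=I and Des(τ)=J equals Σ_{λ ⊢ n} d_{λ,I} · d_{λ',J}, where λ' is the conjugate partition. -/

import Mathlib

open scoped Classical

noncomputable section

/-- Descent set of a permutation of `Fin n`, as a subset of `{1, ..., n-1}`
(1-indexed: `i` is a descent of `π` iff `π(i) > π(i+1)`). -/
def permDes {n : ℕ} (σ : Equiv.Perm (Fin n)) : Finset ℕ :=
  (Finset.Icc 1 (n - 1)).filter fun i =>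
    ∃ h : i < n, σ ⟨i, h⟩ < σ ⟨i - 1, by omega⟩

/-- Number of entries of a semistandard Young tableau equal to `j`. -/
def ssytWeight {μ : YoungDiagram} (T : SemistandardYoungTableau μ) (j : ℕ) : ℕ :=
  (μ.cells.filter fun c => T c.1 c.2 = j).card

/-- A standard Young tableau with `n` boxes: each of `1, ..., n` appears exactly once. -/
def IsStdYT {μ : YoungDiagram} (n : ℕ) (T : SemistandardYoungTableau μ) : Prop :=
  ∀ k ∈ Finset.Icc 1 n, (μ.cells.filter fun c => T c.1 c.2 = k).card = 1

/-- Descent set of a standard Young tableau: `k` is a descent iff `k+1` lies in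
a strictly lower row than `k`. -/
def sytDes {μ : YoungDiagram} (n : ℕ) (T : SemistandardYoungTableau μ) : Finset ℕ :=
  (Finset.Icc 1 (n - 1)).filter fun k =>
    ∃ c₁ ∈ μ.cells, ∃ c₂ ∈ μ.cells,
      T c₁.1 c₁.2 = k ∧ T c₂.1 c₂.2 = k + 1 ∧ c₁.1 < c₂.1

/-- `d_{λ,I}`: the number of standard Young tableaux of shape `λ` with descent set `I`. -/
def dCoef (μ : YoungDiagram) (n : ℕ) (I : Finset ℕ) : ℕ :=
  Nat.card {T : SemistandardYoungTableau μ // IsStdYT n T ∧ sytDes n T = I}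

/-- The Young diagram of a partition of `n`. -/
def toYD {n : ℕ} (p : n.Partition) : YoungDiagram where
  cells := (Finset.range n ×ˢ Finset.range n).filter fun c =>
    c.1 < (p.parts.filter fun a => c.2 < a).card
  isLowerSet := by
    intro x y hyx hx
    simp only [Finset.coe_filter, Set.mem_setOf_eq, Finset.mem_product,
      Finset.mem_range] at hx ⊢
    obtain ⟨⟨h1, h2⟩, h3⟩ := hx
    refine ⟨⟨lt_of_le_of_lt hyx.1 h1, lt_of_le_of_lt hyx.2 h2⟩,
      lt_of_le_of_lt hyx.1 (lt_of_lt_of_le h3 ?_)⟩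
    exact Multiset.card_le_card
      (Multiset.monotone_filter_right _ fun a ha => lt_of_le_of_lt hyx.2 ha)


/-- Local growth rule. -/
def phi (a b : ℕ) (x : Prop) : ℕ × ℕ :=
  if a = b then (if a = 0 then (if x then (1, 1) else (0, 0)) else (a + 1, a + 1)) else (a, b)

def psi (z : ℕ × ℕ) : ℕ × ℕ :=
  if z.1 = z.2 then (z.1 - 1, z.1 - 1) else z

theorem phi_symm (a b : ℕ) (x : Prop) : phi b a x = (phi a b x).swap := by
  unfold phi; split_ifs <;> simp_all

theorem psi_phi (a b : ℕ) (x : Prop) (h : x → a = 0 ∧ b = 0) : psi (phi a b x) = (a, b) := by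
  unfold phi psi; split_ifs <;> simp_all <;> omega

theorem phi_psi (z : ℕ × ℕ) : phi (psi z).1 (psi z).2 (z = (1, 1)) = z := by
  obtain ⟨a, b⟩ := z
  unfold phi psi; split_ifs <;> simp_all <;> omega

theorem phi_eq_one (a b : ℕ) (x : Prop) (h : x → a = 0 ∧ b = 0) : x ↔ phi a b x = (1, 1) := by
  unfold phi; split_ifs <;> simp_all <;> grind

/-- Generic existence of a grid filling. -/
theorem grid_exists (F : ℕ → ℕ → ℕ × ℕ → ℕ × ℕ) (h0 v0 : ℕ → ℕ) :
    ∃ H V : ℕ → ℕ → ℕ, (∀ i, H i 0 = h0 i) ∧ (∀ j, V 0 j = v0 j) ∧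
      ∀ i j, (H i (j+1), V (i+1) j) = F i j (H i j, V i j) := by
  let Vr : (ℕ → ℕ) → ℕ → ℕ → ℕ := fun h j i =>
    Nat.rec (v0 j) (fun i v => (F i j (h i, v)).2) i
  let Hr : ℕ → ℕ → ℕ := fun j =>
    Nat.rec h0 (fun j h => fun i => (F i j (h i, Vr h j i)).1) j
  exact ⟨fun i j => Hr j i, fun i j => Vr (Hr j) j i, fun i => rfl, fun j => rfl,
    fun i j => rfl⟩

structure Grow (n : ℕ) (X : ℕ → ℕ → Prop) (H V : ℕ → ℕ → ℕ) : Prop where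
  h0 : ∀ i < n, H i 0 = 0
  v0 : ∀ j < n, V 0 j = 0
  step : ∀ i < n, ∀ j < n, (H i (j+1), V (i+1) j) = phi (H i j) (V i j) (X i j)

theorem Grow.symm {n X H V} (g : Grow n X H V) :
    Grow n (fun i j => X j i) (fun i j => V j i) (fun i j => H j i) := by
  refine ⟨g.v0, g.h0, fun i hi j hj => ?_⟩
  rw [phi_symm, ← g.step j hj i hi]; rfl

/-- The graph of a permutation. -/
def pX {n : ℕ} (ρ : Equiv.Perm (Fin n)) (i j : ℕ) : Prop := ∃ h : i < n, (ρ ⟨i, h⟩ : ℕ) = j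

theorem pX_inv {n : ℕ} (ρ : Equiv.Perm (Fin n)) : pX ρ⁻¹ = fun i j => pX ρ j i := by
  funext i j
  simp only [pX, eq_iff_iff]
  constructor
  · rintro ⟨h, e⟩
    subst e
    exact ⟨(ρ⁻¹ ⟨i, h⟩).2, by simp⟩
  · rintro ⟨h, e⟩
    subst e
    exact ⟨(ρ ⟨j, h⟩).2, by simp⟩

theorem Grow.H_ne {n} {ρ : Equiv.Perm (Fin n)} {H V} (g : Grow n (pX ρ) H V) (i : ℕ) (hi : i < n) :
    ∀ j ≤ n, H i j ≠ 0 → (ρ ⟨i, hi⟩ : ℕ) < j := by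
  intro j
  induction j with
  | zero => intro _ h; exact absurd (g.h0 i hi) h
  | succ j ih =>
    intro hj h
    have := g.step i hi j (by omega)
    by_cases hx : pX ρ i j
    · obtain ⟨_, e⟩ := hx; omega
    · have : H i j ≠ 0 := by
        intro h0
        simp only [phi, h0, hx] at this
        split_ifs at this <;> simp_all
      have := ih (by omega) this
      omega

theorem Grow.V_ne {n} {ρ : Equiv.Perm (Fin n)} {H V} (g : Grow n (pX ρ) H V) (j : ℕ) (hj : j < n) :
    ∀ i ≤ n, V i j ≠ 0 → (ρ⁻¹ ⟨j, hj⟩ : ℕ) < i := by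
  have := g.symm
  rw [← pX_inv] at this
  exact this.H_ne j hj

theorem Grow.X_zero {n} {ρ : Equiv.Perm (Fin n)} {H V} (g : Grow n (pX ρ) H V) (i j : ℕ)
    (hx : pX ρ i j) : H i j = 0 ∧ V i j = 0 := by
  obtain ⟨hi, e⟩ := hx
  have hj : j < n := e ▸ (ρ ⟨i, hi⟩).2
  constructor
  · by_contra h
    have := g.H_ne i hi j hj.le h
    omega
  · by_contra h
    have := g.V_ne j hj i hi.le h
    have e2 : (⟨j, hj⟩ : Fin n) = ρ ⟨i, hi⟩ := Fin.ext e.symm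
    rw [e2] at this
    simp at this

theorem Grow.H_ne_iff {n} {ρ : Equiv.Perm (Fin n)} {H V} (g : Grow n (pX ρ) H V)
    (i : ℕ) (hi : i < n) :
    ∀ j ≤ n, (H i j ≠ 0 ↔ (ρ ⟨i, hi⟩ : ℕ) < j) := by
  intro j hj
  refine ⟨g.H_ne i hi j hj, ?_⟩
  induction j with
  | zero => simp
  | succ j ih =>
    intro h
    have hs := g.step i hi j (by omega)
    by_cases hx : pX ρ i j
    · obtain ⟨h1, h2⟩ := g.X_zero i j hx
      rw [h1, h2] at hs
      simp [phi, hx] at hs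
      omega
    · have h3 : (ρ ⟨i, hi⟩ : ℕ) ≠ j := fun e => hx ⟨hi, e⟩
      have := ih (by omega) (by omega)
      simp only [phi] at hs
      split_ifs at hs <;> simp_all

theorem Grow.V_ne_iff {n} {ρ : Equiv.Perm (Fin n)} {H V} (g : Grow n (pX ρ) H V)
    (j : ℕ) (hj : j < n) :
    ∀ i ≤ n, (V i j ≠ 0 ↔ (ρ⁻¹ ⟨j, hj⟩ : ℕ) < i) := by
  have := g.symm
  rw [← pX_inv] at this
  exact this.H_ne_iff j hj

/-- Descents. -/
theorem Grow.desc {n} {ρ : Equiv.Perm (Fin n)} {H V} (g : Grow n (pX ρ) H V)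
    (i : ℕ) (hi : i + 1 < n) :
    ∀ j ≤ n, H i j ≠ 0 → H (i+1) j ≠ 0 →
      (H i j < H (i+1) j ↔ ρ ⟨i+1, hi⟩ < ρ ⟨i, by omega⟩) := by
  intro j
  induction j with
  | zero => intro _ h; exact absurd (g.h0 i (by omega)) h
  | succ j ih =>
    intro hj ha hb
    have s1 := g.step i (by omega) j (by omega)
    have s2 := g.step (i+1) hi j (by omega)
    have z1 := g.X_zero i j
    have z2 := g.X_zero (i+1) j
    have n1 := g.H_ne_iff i (by omega) j (by omega)
    have n2 := g.H_ne_iff (i+1) (by omega) j (by omega)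
    have n1' := g.H_ne_iff i (by omega) (j+1) (by omega)
    have n2' := g.H_ne_iff (i+1) (by omega) (j+1) (by omega)
    have hne : (ρ ⟨i+1, hi⟩ : ℕ) ≠ ρ ⟨i, by omega⟩ := by
      intro h
      have := ρ.injective (Fin.ext h)
      simp at this
    replace ih := ih (by omega)
    rw [Fin.lt_def] at ih ⊢
    have x1 : pX ρ i j ↔ (ρ ⟨i, by omega⟩ : ℕ) = j :=
      ⟨fun ⟨_, h⟩ => h, fun h => ⟨_, h⟩⟩
    have x2 : pX ρ (i+1) j ↔ (ρ ⟨i+1, by omega⟩ : ℕ) = j :=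
      ⟨fun ⟨_, h⟩ => h, fun h => ⟨_, h⟩⟩
    rw [x1] at z1 s1
    rw [x2] at z2 s2
    generalize (ρ ⟨i, by omega⟩ : ℕ) = r at *
    generalize (ρ ⟨i+1, by omega⟩ : ℕ) = s at *
    generalize H i (j+1) = a' at *
    generalize H (i+1) (j+1) = b' at *
    generalize H i j = a at *
    generalize H (i+1) j = b at *
    generalize V i j = u at *
    generalize V (i+1) j = v at *
    generalize V (i+1+1) j = w at *
    clear x1 x2 g hi
    simp only [phi] at s1 s2
    split_ifs at s1 s2 <;> simp only [Prod.mk.injEq] at s1 s2 <;> obtain ⟨s1, s1'⟩ := s1 <;>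
      obtain ⟨s2, s2'⟩ := s2 <;> subst s1 s1' s2 s2' <;> grind

/-- shape at (i,j) -/
def shp (q : ℕ → ℕ) (m r : ℕ) : ℤ := Nat.count (fun i => q i = r) m

theorem shp_succ (q m r) : shp q (m+1) r = shp q m r + if q m = r then 1 else 0 := by
  simp [shp, Nat.count_succ]

def PartS (s : ℕ → ℤ) : Prop := ∀ r, 1 ≤ r → s (r+1) ≤ s r ∧ 0 ≤ s r

theorem phi_ms (a b r : ℕ) (x : Prop) (z) (hz : z = phi a b x) :
    (if a = r then (1:ℤ) else 0) + (if z.2 = r then 1 else 0)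
      = (if b = r then (1:ℤ) else 0) + (if z.1 = r then 1 else 0) := by
  subst hz
  unfold phi; split_ifs <;> simp_all

theorem part_fwd (s : ℕ → ℤ) (a b : ℕ) (x : Prop) (s1 s2 s3 : ℕ → ℤ) (hs : PartS s)
    (z) (hz : z = phi a b x)
    (e1 : ∀ r, 1 ≤ r → s1 r = s r + if a = r then 1 else 0)
    (e2 : ∀ r, 1 ≤ r → s2 r = s r + if b = r then 1 else 0)
    (e3 : ∀ r, 1 ≤ r → s3 r = s2 r + if z.1 = r then 1 else 0)
    (h1 : PartS s1) (h2 : PartS s2) : PartS s3 := by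
  have hφ : (a ≠ b ∧ z.1 = a) ∨ (a = b ∧ a ≠ 0 ∧ z.1 = a + 1) ∨ (a = b ∧ a = 0 ∧ z.1 ≤ 1) := by
    subst hz; unfold phi; split_ifs <;> simp_all <;> omega
  clear hz
  intro r hr
  have a1 := e1 r hr
  have a2 := e2 r hr
  have a3 := e3 r hr
  have b1 := e1 (r+1) (by omega)
  have b2 := e2 (r+1) (by omega)
  have b3 := e3 (r+1) (by omega)
  have d1 := hs r hr
  have d2 := h1 r hr
  have d3 := h2 r hr
  clear e1 e2 e3 hs h1 h2
  generalize z.1 = w at *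
  generalize s r = t, s1 r = t1, s2 r = t2, s3 r = t3, s (r+1) = u, s1 (r+1) = u1,
    s2 (r+1) = u2, s3 (r+1) = u3 at *
  split_ifs at * <;> omega

theorem part_bwd (s : ℕ → ℤ) (z w : ℕ × ℕ) (s1 s2 s3 : ℕ → ℤ) (hs : PartS s3)
    (hw : w = psi z)
    (e1 : ∀ r, 1 ≤ r → s1 r = s r + if w.1 = r then 1 else 0)
    (e2 : ∀ r, 1 ≤ r → s2 r = s r + if w.2 = r then 1 else 0)
    (e3 : ∀ r, 1 ≤ r → s3 r = s2 r + if z.1 = r then 1 else 0)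
    (h1 : PartS s1) (h2 : PartS s2) : PartS s := by
  obtain ⟨a, b⟩ := z
  have hφ : (a ≠ b ∧ w.1 = a ∧ w.2 = b) ∨ (a = b ∧ w.1 = a - 1 ∧ w.2 = a - 1) := by
    subst hw; unfold psi; split_ifs <;> simp_all
  clear hw
  intro r hr
  have a1 := e1 r hr
  have a2 := e2 r hr
  have a3 := e3 r hr
  have b1 := e1 (r+1) (by omega)
  have b2 := e2 (r+1) (by omega)
  have b3 := e3 (r+1) (by omega)
  have d1 := hs r hr
  have d2 := h1 r hr
  have d3 := h2 r hr
  have d4 := h1 (r+1) (by omega)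
  have d5 := h2 (r+1) (by omega)
  have d6 := hs (r+1) (by omega)
  clear e1 e2 e3 hs h1 h2
  simp only at a3 b3
  generalize w.1 = w1, w.2 = w2 at *
  generalize s r = t, s1 r = t1, s2 r = t2, s3 r = t3, s (r+1) = u, s1 (r+1) = u1,
    s2 (r+1) = u2, s3 (r+1) = u3, s1 (r+1+1) = y1, s2 (r+1+1) = y2, s3 (r+1+1) = y3 at *
  split_ifs at * <;> omega

def LatW (n : ℕ) (q : ℕ → ℕ) : Prop := ∀ m ≤ n, PartS (shp q m)

theorem vert {H V : ℕ → ℕ → ℕ} {n j r : ℕ} {X : ℕ → Prop}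
    (st : ∀ i < n, (H i (j+1), V (i+1) j) = phi (H i j) (V i j) (X i)) :
    ∀ i ≤ n, shp (fun i => H i (j+1)) i r + (if V 0 j = r then 1 else 0)
      = shp (fun i => H i j) i r + (if V i j = r then 1 else 0) := by
  intro i
  induction i with
  | zero => intro _; simp [shp]
  | succ i ih =>
    intro hi
    have := ih (by omega)
    have := phi_ms (H i j) (V i j) r (X i) _ (st i (by omega))
    simp only [shp_succ] at *
    omega

theorem Grow.vert {n X H V} (g : Grow n X H V) (i j r : ℕ) (hi : i ≤ n) (hj : j < n) (hr : 1 ≤ r) :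
    shp (fun i => H i (j+1)) i r = shp (fun i => H i j) i r + (if V i j = r then 1 else 0) := by
  have := _root_.vert (r := r) (fun i hi => g.step i hi j hj) i hi
  rw [g.v0 j hj, if_neg (by omega)] at this
  omega

theorem Grow.base {n X H V} (g : Grow n X H V) (i r : ℕ) (hi : i ≤ n) (hr : 1 ≤ r) :
    shp (fun i => H i 0) i r = 0 := by
  induction i with
  | zero => simp [shp]
  | succ i ih =>
    rw [shp_succ, ih (by omega), g.h0 i (by omega), if_neg (by omega)]; rfl

theorem Grow.shape_eq {n X H V} (g : Grow n X H V) (i j r : ℕ) (hi : i ≤ n) (hj : j ≤ n)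
    (hr : 1 ≤ r) : shp (fun i => H i j) i r = shp (fun j => V i j) j r := by
  induction j with
  | zero => rw [g.base i r hi hr]; simp [shp]
  | succ j ih =>
    rw [g.vert i j r hi (by omega) hr, ih (by omega), shp_succ]

theorem Grow.part {n X H V} (g : Grow n X H V) (j : ℕ) (hj : j ≤ n) :
    ∀ i ≤ n, PartS (shp (fun i => H i j) i) := by
  induction j with
  | zero =>
    intro i hi r hr
    rw [g.base i r hi hr, g.base i (r+1) hi (by omega)]; simp
  | succ j ih =>
    intro i
    induction i with
    | zero => intro _ r hr; simp [shp]
    | succ i ihi =>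
      intro hi
      refine part_fwd _ (H i j) (V i j) (X i j) _ _ _ (ih (by omega) i (by omega)) _
        (g.step i hi j hj) ?_ ?_ ?_ (ih (by omega) (i+1) hi) (ihi (by omega))
      · intro r hr; rw [shp_succ]
      · intro r hr; rw [g.vert i j r (by omega) hj hr]
      · intro r hr; rw [shp_succ]

theorem Grow.lat {n X H V} (g : Grow n X H V) : LatW n (fun i => H i n) :=
  fun i hi => g.part n le_rfl i hi

theorem grow_exists {n : ℕ} (X : ℕ → ℕ → Prop) : ∃ H V, Grow n X H V ∧
    (∀ i, n ≤ i → H i n = 0) ∧ (∀ j, n ≤ j → V n j = 0) := by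
  obtain ⟨H, V, h, v, s⟩ := grid_exists (fun i j z => phi z.1 z.2 (X i j)) (fun _ => 0) (fun _ => 0)
  refine ⟨fun i j => if i < n then H i j else 0, fun i j => if j < n then V i j else 0,
    ⟨?_, ?_, ?_⟩, ?_, ?_⟩
  · intro i hi; simp [h]
  · intro i hi; simp [v]
  · intro i hi j hj; simp only [hi, hj, if_true]; exact s i j
  · intro i hi; simp [not_lt.2 hi]
  · intro i hi; simp [not_lt.2 hi]

theorem grow_unique {n : ℕ} {ρ ρ' : Equiv.Perm (Fin n)} {H V H' V'} (g : Grow n (pX ρ) H V)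
    (g' : Grow n (pX ρ') H' V') (hq : ∀ i < n, H i n = H' i n) (hp : ∀ j < n, V n j = V' n j) :
    ρ = ρ' := by
  have key : ∀ k ≤ n, ∀ i < n, H i (n - k) = H' i (n - k) := by
    intro k
    induction k with
    | zero => simpa using hq
    | succ k ih =>
      intro hk
      have ih := ih (by omega)
      obtain ⟨j, hj⟩ : ∃ j, j = n - (k + 1) := ⟨_, rfl⟩
      have hj' : n - k = j + 1 := by omega
      rw [← hj]; rw [hj'] at ih
      have both : ∀ i < n, V (i+1) j = V' (i+1) j → H i j = H' i j ∧ V i j = V' i j := by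
        intro i hi e
        have s := g.step i hi j (by omega)
        have s' := g'.step i hi j (by omega)
        rw [ih i hi, e] at s
        have := psi_phi _ _ _ (g.X_zero i j)
        have t := psi_phi _ _ _ (g'.X_zero i j)
        rw [← s, s', t] at this
        simp at this
        exact ⟨this.1.symm, this.2.symm⟩
      have vv : ∀ l ≤ n, V (n - l) j = V' (n - l) j := by
        intro l
        induction l with
        | zero => intro _; exact hp j (by omega)
        | succ l ihl =>
          intro hl
          refine (both (n - (l+1)) (by omega) ?_).2
          have : n - (l + 1) + 1 = n - l := by omega
          rw [this]; exact ihl (by omega)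
      intro i hi
      refine (both i hi ?_).1
      have := vv (n - (i+1)) (by omega)
      rwa [show n - (n - (i+1)) = i + 1 by omega] at this
  have key' : ∀ i < n, ∀ j ≤ n, H i j = H' i j := by
    intro i hi j hj
    have := key (n - j) (by omega) i hi
    rwa [show n - (n - j) = j by omega] at this
  apply Equiv.ext
  intro i
  apply Fin.ext
  have a := g.H_ne_iff i i.2
  have a' := g'.H_ne_iff i i.2
  by_contra hne
  rcases Nat.lt_or_gt_of_ne hne with h | h
  · have b := (a ((ρ i : ℕ) + 1) (by omega)).2 (by simp)
    rw [key' i i.2 _ (by omega)] at b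
    have := (a' ((ρ i : ℕ) + 1) (by omega)).1 b
    simp at this; omega
  · have b := (a' ((ρ' i : ℕ) + 1) (by omega)).2 (by simp)
    rw [← key' i i.2 _ (by omega)] at b
    have := (a ((ρ' i : ℕ) + 1) (by omega)).1 b
    simp at this; omega

theorem grow_surj {n : ℕ} (q p : ℕ → ℕ) (hq : ∀ i < n, q i ≠ 0) (hp : ∀ i < n, p i ≠ 0)
    (lq : LatW n q) (lp : LatW n p) (hqp : ∀ r, 1 ≤ r → shp q n r = shp p n r) :
    ∃ (ρ : Equiv.Perm (Fin n)) (H V : ℕ → ℕ → ℕ), Grow n (pX ρ) H V ∧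
      (∀ i < n, H i n = q i) ∧ (∀ i < n, V n i = p i) := by
  obtain ⟨H', V', h, v, s⟩ := grid_exists (fun i j z => psi z) (fun i => q (n-1-i))
    (fun j => p (n-1-j))
  obtain ⟨H, hH⟩ : ∃ H : ℕ → ℕ → ℕ, H = fun i j => H' (n-1-i) (n-j) := ⟨_, rfl⟩
  obtain ⟨V, hV⟩ : ∃ V : ℕ → ℕ → ℕ, V = fun i j => V' (n-i) (n-1-j) := ⟨_, rfl⟩
  have hHn : ∀ i < n, H i n = q i := by
    intro i hi
    simp only [hH, Nat.sub_self, h]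
    congr 1; omega
  have hVn : ∀ i < n, V n i = p i := by
    intro i hi
    simp only [hV, Nat.sub_self, v]
    congr 1; omega
  have hs : ∀ i < n, ∀ j < n, (H i j, V i j) = psi (H i (j+1), V (i+1) j) := by
    intro i hi j hj
    have := s (n-1-i) (n-1-j)
    simp only [hH, hV]
    rw [show n - (j+1) = n-1-j by omega, show n-(i+1) = n-1-i by omega, ← this,
      show n-1-j+1 = n-j by omega, show n-1-i+1 = n-i by omega]
  clear s h v hH hV
  have hs' : ∀ i < n, ∀ j < n, (H i (j+1), V (i+1) j) =
      phi (H i j) (V i j) ((H i (j+1), V (i+1) j) = (1,1)) := by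
    intro i hi j hj
    have := phi_psi (H i (j+1), V (i+1) j)
    rw [← hs i hi j hj] at this
    exact this.symm
  obtain ⟨c, hc⟩ : ∃ c : ℕ → ℕ → ℕ → ℤ, c = fun i j r =>
    shp (fun i => H i j) i r - shp (fun i => H i j) n r + shp p j r := ⟨_, rfl⟩
  have c1 : ∀ i j r, c (i+1) j r = c i j r + if H i j = r then 1 else 0 := by
    intro i j r; simp only [hc, shp_succ]; ring
  have c2 : ∀ i ≤ n, ∀ j < n, ∀ r, c i (j+1) r = c i j r + if V i j = r then 1 else 0 := by
    intro i hi j hj r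
    have a := vert (r := r) (fun i hi => hs' i hi j hj) i hi
    have b := vert (r := r) (fun i hi => hs' i hi j hj) n le_rfl
    rw [hVn j hj] at b
    simp only [hc, shp_succ]
    omega
  have cong : ∀ i ≤ n, ∀ r, shp (fun i => H i n) i r = shp q i r := by
    intro i hi r
    induction i with
    | zero => simp [shp]
    | succ i ih => rw [shp_succ, shp_succ, ih (by omega), hHn i (by omega)]
  have cn1 : ∀ j r, c n j r = shp p j r := by intro j r; simp [hc]
  have cn2 : ∀ i ≤ n, ∀ r, 1 ≤ r → c i n r = shp q i r := by
    intro i hi r hr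
    simp only [hc, cong i hi, cong n le_rfl]
    rw [hqp r hr]; ring
  have pc : ∀ k ≤ n, ∀ l ≤ n, PartS (c (n - l) (n - k)) := by
    intro k
    induction k with
    | zero =>
      intro _ l hl r hr
      rw [Nat.sub_zero, cn2 _ (by omega) _ hr, cn2 _ (by omega) _ (by omega)]
      exact lq _ (by omega) r hr
    | succ k ih =>
      intro hk l
      induction l with
      | zero =>
        intro _ r hr
        rw [Nat.sub_zero, cn1, cn1]
        exact lp _ (by omega) r hr
      | succ l ihl =>
        intro hl
        obtain ⟨i, hi⟩ : ∃ i, i = n - (l+1) := ⟨_, rfl⟩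
        obtain ⟨j, hj⟩ : ∃ j, j = n - (k+1) := ⟨_, rfl⟩
        have p1 := ih (by omega) (l+1) hl
        have p2 := ih (by omega) l (by omega)
        have p3 := ihl (by omega)
        rw [show n - l = i + 1 by omega] at p2 p3
        rw [show n - k = j + 1 by omega] at p1 p2
        rw [← hi, ← hj]
        rw [← hi] at p1
        rw [← hj] at p3
        refine part_bwd (c i j) (H i (j+1), V (i+1) j) (H i j, V i j) _ _ _ p2
          (hs i (by omega) j (by omega)) ?_ ?_ ?_ p3 p1
        · intro r _; exact c1 i j r
        · intro r _; exact c2 i (by omega) j (by omega) r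
        · intro r _; exact c1 i (j+1) r
  have pc' : ∀ i ≤ n, ∀ j ≤ n, PartS (c i j) := by
    intro i hi j hj
    have := pc (n-j) (by omega) (n-i) (by omega)
    rwa [show n - (n - j) = j by omega, show n - (n - i) = i by omega] at this
  have ite0 : ∀ a b : ℕ, (0:ℤ) ≤ if a = b then 1 else 0 := by intro a b; split_ifs <;> simp
  have z1 : ∀ r, 1 ≤ r → ∀ k ≤ n, c 0 (n - k) r ≤ 0 := by
    intro r hr k
    induction k with
    | zero => intro _; rw [Nat.sub_zero, cn2 0 (by omega) r hr]; simp [shp]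
    | succ k ih =>
      intro hk
      have := ih (by omega)
      rw [show n - k = n - (k+1) + 1 by omega, c2 0 (by omega) _ (by omega)] at this
      have := ite0 (V 0 (n - (k+1))) r
      omega
  have z2 : ∀ r, 1 ≤ r → ∀ k ≤ n, c (n - k) 0 r ≤ 0 := by
    intro r hr k
    induction k with
    | zero => intro _; rw [Nat.sub_zero, cn1]; simp [shp]
    | succ k ih =>
      intro hk
      have := ih (by omega)
      rw [show n - k = n - (k+1) + 1 by omega, c1] at this
      have := ite0 (H (n - (k+1)) 0) r
      omega
  have V0 : ∀ j < n, V 0 j = 0 := by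
    intro j hj
    by_contra hne
    have hr : 1 ≤ V 0 j := by omega
    have a := z1 _ hr (n - (j+1)) (by omega)
    rw [show n - (n - (j+1)) = j + 1 by omega, c2 0 (by omega) j hj, if_pos rfl] at a
    have := (pc' 0 (by omega) j hj.le _ hr).2
    omega
  have H0 : ∀ j < n, H j 0 = 0 := by
    intro j hj
    by_contra hne
    have hr : 1 ≤ H j 0 := by omega
    have a := z2 _ hr (n - (j+1)) (by omega)
    rw [show n - (n - (j+1)) = j + 1 by omega, c1, if_pos rfl] at a
    have := (pc' j hj.le 0 (by omega) _ hr).2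
    omega
  have Hp1 : ∀ i < n, ∀ j < n, H i j ≠ 0 → H i (j+1) ≠ 0 := by
    intro i hi j hj h
    have := hs i hi j hj
    unfold psi at this
    split_ifs at this <;> simp only [Prod.mk.injEq] at this <;> grind
  have Vp1 : ∀ i < n, ∀ j < n, V i j ≠ 0 → V (i+1) j ≠ 0 := by
    intro i hi j hj h
    have := hs i hi j hj
    unfold psi at this
    split_ifs at this <;> simp only [Prod.mk.injEq] at this <;> grind
  have Hp : ∀ i < n, ∀ j j', j ≤ j' → j' ≤ n → H i j ≠ 0 → H i j' ≠ 0 := by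
    intro i hi j j' hjj
    induction j', hjj using Nat.le_induction with
    | base => intro _ h; exact h
    | succ j' _ ih => intro h1 h2; exact Hp1 i hi j' (by omega) (ih (by omega) h2)
  have Vp : ∀ j < n, ∀ i i', i ≤ i' → i' ≤ n → V i j ≠ 0 → V i' j ≠ 0 := by
    intro j hj i i' hii
    induction i', hii using Nat.le_induction with
    | base => intro _ h; exact h
    | succ i' _ ih => intro h1 h2; exact Vp1 i' (by omega) j hj (ih (by omega) h2)
  have ex : ∀ i : Fin n, ∃ j : Fin n, H i (j+1) = 1 ∧ V (i+1) j = 1 := by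
    intro i
    have hn0 := hq i i.2
    rw [← hHn i i.2] at hn0
    have hE : ∃ j, H i j ≠ 0 := ⟨n, hn0⟩
    have m1 := Nat.find_spec hE
    have m2 : Nat.find hE ≤ n := Nat.find_min' hE hn0
    have m3 : Nat.find hE ≠ 0 := by
      intro h; rw [h] at m1; exact m1 (H0 i i.2)
    have m4 := Nat.find_min hE (m := Nat.find hE - 1) (by omega)
    generalize hk : Nat.find hE = k at *
    refine ⟨⟨k - 1, by omega⟩, ?_⟩
    have := hs' i i.2 (k-1) (by omega)
    push Not at m4
    rw [m4] at this
    simp only [show k - 1 + 1 = k by omega] at this ⊢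
    simp only [phi] at this
    split_ifs at this <;> simp only [Prod.mk.injEq] at * <;> grind
  have xz : ∀ i < n, ∀ j < n, H i (j+1) = 1 → V (i+1) j = 1 → H i j = 0 ∧ V i j = 0 := by
    intro i hi j hj a b
    have := hs i hi j hj
    rw [a, b] at this
    simpa [psi] using this
  choose f hf1 hf2 using ex
  have finj : Function.Injective f := by
    have : ∀ a b : Fin n, f a = f b → ¬ a < b := by
      intro a b e hlt
      have z := (xz b b.2 (f b) (f b).2 (hf1 b) (hf2 b)).2
      refine Vp (f b) (f b).2 (a+1) b (by simpa using hlt) b.2.le ?_ z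
      rw [← e, hf2 a]; simp
    intro a b e
    rcases lt_trichotomy a b with h | h | h
    · exact absurd h (this a b e)
    · exact h
    · exact absurd h (this b a e.symm)
  refine ⟨Equiv.ofBijective f (Finite.injective_iff_bijective.1 finj), H, V,
    ⟨H0, V0, ?_⟩, hHn, hVn⟩
  intro i hi j hj
  have e : pX (Equiv.ofBijective f (Finite.injective_iff_bijective.1 finj)) i j ↔
      (H i (j+1), V (i+1) j) = (1, 1) := by
    have a := hf1 ⟨i, hi⟩
    have b := hf2 ⟨i, hi⟩
    simp only [pX, Equiv.ofBijective_apply, Prod.mk.injEq]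
    constructor
    · rintro ⟨_, rfl⟩; exact ⟨a, b⟩
    · rintro ⟨u, v⟩
      refine ⟨hi, ?_⟩
      have c := (xz i hi j hj u v).1
      have d := (xz i hi _ (f ⟨i, hi⟩).2 a b).1
      rcases lt_trichotomy (f ⟨i, hi⟩ : ℕ) j with h | h | h
      · exact absurd c (Hp i hi _ j h hj.le (by rw [a]; simp))
      · exact h
      · exact absurd d (Hp i hi _ _ h (f ⟨i, hi⟩).2.le (by rw [u]; simp))
  rw [e]
  exact hs' i hi j hj

theorem card_eq_of_rel {α β : Type*} (R : α → β → Prop) (h1 : ∀ a, ∃ b, R a b)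
    (h2 : ∀ b, ∃ a, R a b) (h3 : ∀ a b b', R a b → R a b' → b = b')
    (h4 : ∀ a a' b, R a b → R a' b → a = a') : Nat.card α = Nat.card β := by
  choose f hf using h1
  refine Nat.card_congr (Equiv.ofBijective f ⟨?_, ?_⟩)
  · intro a a' e
    exact h4 a a' (f a) (hf a) (e ▸ hf a')
  · intro b
    obtain ⟨a, ha⟩ := h2 b
    exact ⟨a, h3 a _ _ (hf a) ha⟩

/-- number of letters `r` among the first `m`. -/
def cnt (q : ℕ → ℕ) (r m : ℕ) : ℕ := Nat.count (fun i => q i = r) m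

theorem cnt_zero (q r) : cnt q r 0 = 0 := rfl
theorem cnt_succ (q r m) : cnt q r (m+1) = cnt q r m + if q m = r then 1 else 0 := by
  simp [cnt, Nat.count_succ]
theorem cnt_mono (q r) {m m' : ℕ} (h : m ≤ m') : cnt q r m ≤ cnt q r m' :=
  Nat.count_monotone _ h

theorem shp_eq (q m r) : shp q m r = cnt q r m := rfl

structure IsWord (μ : YoungDiagram) (n : ℕ) (q : ℕ → ℕ) : Prop where
  supp : ∀ i, q i ≠ 0 ↔ i < n
  lat : LatW n q
  shape : ∀ r, cnt q (r+1) n = μ.rowLen r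

def wDes (n : ℕ) (q : ℕ → ℕ) : Finset ℕ :=
  (Finset.Icc 1 (n - 1)).filter fun i => q (i-1) < q i

def Link {μ : YoungDiagram} (n : ℕ) (T : SemistandardYoungTableau μ) (q : ℕ → ℕ) : Prop :=
  ∀ r c, (r, c) ∈ μ → ∀ m ≤ n, (T r c ≤ m ↔ c < cnt q (r+1) m)

theorem std_entries {μ : YoungDiagram} {n : ℕ} (hμ : μ.card = n) {T : SemistandardYoungTableau μ}
    (hT : IsStdYT n T) (c : ℕ × ℕ) (hc : c ∈ μ.cells) : T c.1 c.2 ∈ Finset.Icc 1 n := by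
  have h1 : ((Finset.Icc 1 n).biUnion fun k => μ.cells.filter fun c => T c.1 c.2 = k).card = n := by
    rw [Finset.card_biUnion]
    · rw [Finset.sum_congr rfl hT]; simp
    · intro a _ b _ hab
      simp only [Function.onFun]
      rw [Finset.disjoint_left]
      intro x hx hx'
      simp only [Finset.mem_filter] at hx hx'
      exact hab (hx.2.symm.trans hx'.2)
  have h2 : ((Finset.Icc 1 n).biUnion fun k => μ.cells.filter fun c => T c.1 c.2 = k) = μ.cells := by
    apply Finset.eq_of_subset_of_card_le
    · intro x hx
      simp only [Finset.mem_biUnion, Finset.mem_filter] at hx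
      obtain ⟨_, _, h, _⟩ := hx
      exact h
    · rw [h1]; exact hμ.le
  rw [← h2] at hc
  simp only [Finset.mem_biUnion, Finset.mem_filter] at hc
  obtain ⟨k, hk, _, e⟩ := hc
  rw [e]; exact hk

theorem std_unique {μ : YoungDiagram} {n : ℕ} (hμ : μ.card = n) {T : SemistandardYoungTableau μ}
    (hT : IsStdYT n T) (c d : ℕ × ℕ) (hc : c ∈ μ.cells) (hd : d ∈ μ.cells)
    (e : T c.1 c.2 = T d.1 d.2) : c = d := by
  have h := hT _ (std_entries hμ hT c hc)
  rw [Finset.card_eq_one] at h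
  obtain ⟨x, hx⟩ := h
  have h1 : c ∈ ({x} : Finset (ℕ × ℕ)) := by rw [← hx]; simp [hc]
  have h2 : d ∈ ({x} : Finset (ℕ × ℕ)) := by rw [← hx]; simp [hd, e]
  simp at h1 h2
  rw [h1, h2]

theorem std_exists {μ : YoungDiagram} {n : ℕ} {T : SemistandardYoungTableau μ}
    (hT : IsStdYT n T) (k : ℕ) (hk : k < n) : ∃ c ∈ μ.cells, T c.1 c.2 = k + 1 := by
  have h := hT (k+1) (by simp; omega)
  rw [Finset.card_eq_one] at h
  obtain ⟨x, hx⟩ := h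
  have h1 : x ∈ ({x} : Finset (ℕ × ℕ)) := by simp
  rw [← hx] at h1
  simp only [Finset.mem_filter] at h1
  exact ⟨x, h1⟩

theorem std_row_strict {μ : YoungDiagram} {n : ℕ} (hμ : μ.card = n)
    {T : SemistandardYoungTableau μ}
    (hT : IsStdYT n T) {r c c' : ℕ} (hcc : c < c') (h : (r, c') ∈ μ) : T r c < T r c' := by
  refine lt_of_le_of_ne (T.row_weak hcc h) ?_
  intro e
  have := std_unique hμ hT (r, c) (r, c') (by simpa using μ.up_left_mem le_rfl hcc.le h)
    (by simpa using h) e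
  simp at this; omega

theorem word_of_std {μ : YoungDiagram} {n : ℕ} (hμ : μ.card = n) (T : SemistandardYoungTableau μ)
    (hT : IsStdYT n T) : ∃ q, IsWord μ n q ∧ Link n T q := by
  choose! f hf hf' using std_exists hT
  obtain ⟨q, hq⟩ : ∃ q : ℕ → ℕ, q = fun k => if k < n then (f k).1 + 1 else 0 := ⟨_, rfl⟩
  have key : ∀ m ≤ n, ∀ r, cnt q (r+1) m ≤ μ.rowLen r ∧
      ∀ c, (r, c) ∈ μ → (T r c ≤ m ↔ c < cnt q (r+1) m) := by
    intro m
    induction m with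
    | zero =>
      intro _ r
      refine ⟨by simp [cnt_zero], fun c hc => ?_⟩
      have := std_entries hμ hT (r, c) (by simpa using hc)
      simp only [Finset.mem_Icc] at this
      simp only [cnt_zero]; omega
    | succ m ih =>
      intro hm r
      obtain ⟨i1, i2⟩ := ih (by omega) r
      rw [cnt_succ]
      have hfm := hf m (by omega)
      have hfm' := hf' m (by omega)
      by_cases hqm : q m = r + 1
      · rw [if_pos hqm]
        have hr : (f m).1 = r := by
          rw [hq] at hqm
          simp only [show m < n by omega, if_true] at hqm
          omega
        obtain ⟨c0, hc0⟩ : ∃ c0, c0 = (f m).2 := ⟨_, rfl⟩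
        have hmem : (r, c0) ∈ μ := by
          rw [← hr, hc0]; simpa using hfm
        rw [hr, ← hc0] at hfm'
        have e : c0 = cnt q (r+1) m := by
          have a := i2 c0 hmem
          by_contra hne
          have hlt : cnt q (r+1) m < c0 := by omega
          have b := i2 _ (μ.up_left_mem le_rfl hlt.le hmem)
          have := std_row_strict hμ hT hlt hmem
          omega
        have hlt := YoungDiagram.mem_iff_lt_rowLen.1 hmem
        refine ⟨by omega, fun c hc => ?_⟩
        have a := i2 c hc
        constructor
        · intro h
          by_cases h' : T r c ≤ m
          · have := a.1 h'; omega
          · have := std_unique hμ hT (r, c) (r, c0) (by simpa using hc) (by simpa using hmem)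
              (by simp only; omega)
            simp at this; omega
        · intro h
          by_cases h' : c < cnt q (r+1) m
          · have := a.2 h'; omega
          · have : c = c0 := by omega
            rw [this]; omega
      · rw [if_neg hqm]
        refine ⟨by omega, fun c hc => ?_⟩
        have a := i2 c hc
        have : T r c ≠ m + 1 := by
          intro h
          have := std_unique hμ hT (r, c) (f m) (by simpa using hc) hfm
              (by simp only; omega)
          apply hqm
          rw [hq]
          simp only [show m < n by omega, if_true, ← this]
        omega
  refine ⟨q, ⟨?_, ?_, ?_⟩, fun r c hc m hm => (key m hm r).2 c hc⟩
  · intro i; rw [hq]; simp only; split_ifs with h <;> simp [h]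
  · intro m hm r hr
    obtain ⟨s, rfl⟩ : ∃ s, r = s + 1 := ⟨r - 1, by omega⟩
    simp only [shp_eq]
    refine ⟨?_, by positivity⟩
    by_contra hlt
    have hlt : cnt q (s+1) m < cnt q (s+1+1) m := by exact_mod_cast not_le.1 hlt
    have k1 := key m hm (s+1)
    have k2 := key m hm s
    have mem : (s+1, cnt q (s+1) m) ∈ μ := YoungDiagram.mem_iff_lt_rowLen.2 (by omega)
    have a := (k1.2 _ mem).2 hlt
    have b := T.col_strict (show s < s + 1 by omega) mem
    have := (k2.2 _ (μ.up_left_mem (show s ≤ s + 1 by omega) le_rfl mem)).1 (by omega)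
    omega
  · intro r
    have k := key n le_rfl r
    by_contra hne
    have hlt : cnt q (r+1) n < μ.rowLen r := by omega
    have mem := YoungDiagram.mem_iff_lt_rowLen.2 hlt
    have := std_entries hμ hT (r, cnt q (r+1) n) (by simpa using mem)
    simp only [Finset.mem_Icc] at this
    have := (k.2 _ mem).1 this.2
    omega

theorem link_eq {μ : YoungDiagram} {n : ℕ} {T : SemistandardYoungTableau μ} {q : ℕ → ℕ}
    (hq : IsWord μ n q) (hl : Link n T q) {k r c : ℕ} (hk : k < n) (h : (r, c) ∈ μ) :
    T r c = k + 1 ↔ q k = r + 1 ∧ c = cnt q (r+1) k := by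
  have a := hl r c h k hk.le
  have b := hl r c h (k+1) hk
  rw [cnt_succ] at b
  split_ifs at b with hh
  · simp only [hh, true_and]; omega
  · simp only [hh, false_and, iff_false]; omega

theorem link_cell {μ : YoungDiagram} {n : ℕ} {q : ℕ → ℕ}
    (hq : IsWord μ n q) {k : ℕ} (hk : k < n) :
    (q k - 1, cnt q (q k) k) ∈ μ ∧ q k = q k - 1 + 1 := by
  have h0 := (hq.supp k).2 hk
  refine ⟨?_, by omega⟩
  rw [YoungDiagram.mem_iff_lt_rowLen, ← hq.shape, show q k - 1 + 1 = q k by omega]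
  have := cnt_mono q (q k) (show k + 1 ≤ n from hk)
  rw [cnt_succ, if_pos rfl] at this
  omega

theorem link_exists_iff {μ : YoungDiagram} {n : ℕ} {T : SemistandardYoungTableau μ} {q : ℕ → ℕ}
    (hq : IsWord μ n q) (hl : Link n T q) {k : ℕ} (hk : k < n) (x : ℕ × ℕ) :
    (x ∈ μ.cells ∧ T x.1 x.2 = k + 1) ↔ x = (q k - 1, cnt q (q k) k) := by
  obtain ⟨r, c⟩ := x
  have hc := link_cell hq hk
  constructor
  · rintro ⟨h1, h2⟩
    have := (link_eq hq hl hk (r := r) (c := c) (by simpa using h1)).1 h2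
    rw [this.2, this.1]; simp
  · intro h
    rw [h]
    refine ⟨by simpa using hc.1, ?_⟩
    rw [link_eq hq hl hk hc.1]
    rw [← hc.2]; simp

theorem link_std {μ : YoungDiagram} {n : ℕ} {T : SemistandardYoungTableau μ} {q : ℕ → ℕ}
    (hq : IsWord μ n q) (hl : Link n T q) : IsStdYT n T := by
  intro k hk
  simp only [Finset.mem_Icc] at hk
  obtain ⟨k, rfl⟩ : ∃ s, k = s + 1 := ⟨k - 1, by omega⟩
  rw [Finset.card_eq_one]
  refine ⟨(q k - 1, cnt q (q k) k), ?_⟩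
  ext x
  rw [Finset.mem_filter, link_exists_iff hq hl (by omega)]
  simp

theorem link_des {μ : YoungDiagram} {n : ℕ} {T : SemistandardYoungTableau μ} {q : ℕ → ℕ}
    (hq : IsWord μ n q) (hl : Link n T q) : sytDes n T = wDes n q := by
  unfold sytDes wDes
  apply Finset.filter_congr
  intro k hk
  simp only [Finset.mem_Icc] at hk
  obtain ⟨k, rfl⟩ : ∃ s, k = s + 1 := ⟨k - 1, by omega⟩
  have e1 := link_exists_iff hq hl (show k < n by omega)
  have e2 := link_exists_iff hq hl (show k + 1 < n by omega)
  have c1 := (link_cell hq (show k < n by omega)).2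
  have c2 := (link_cell hq (show k + 1 < n by omega)).2
  simp only [Nat.add_sub_cancel]
  constructor
  · rintro ⟨x, hx, y, hy, a, b, h⟩
    have := (e1 x).1 ⟨hx, a⟩
    have := (e2 y).1 ⟨hy, b⟩
    subst x y
    simp only at h; omega
  · intro h
    obtain ⟨a1, a2⟩ := (e1 _).2 rfl
    obtain ⟨b1, b2⟩ := (e2 _).2 rfl
    exact ⟨_, a1, _, b1, a2, b2, by simp only; omega⟩

theorem std_of_word {μ : YoungDiagram} {n : ℕ} (q : ℕ → ℕ) (hq : IsWord μ n q) :
    ∃ T : SemistandardYoungTableau μ, Link n T q := by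
  have ex : ∀ r c, (r, c) ∈ μ → ∃ m, c < cnt q (r+1) m := by
    intro r c h
    refine ⟨n, ?_⟩
    rw [hq.shape, ← YoungDiagram.mem_iff_lt_rowLen]; exact h
  let t : ℕ → ℕ → ℕ := fun r c => if h : (r, c) ∈ μ then Nat.find (ex r c h) else 0
  have ht : ∀ r c, (r, c) ∈ μ → ∀ m, (t r c ≤ m ↔ c < cnt q (r+1) m) := by
    intro r c h m
    simp only [t, h, dif_pos]
    constructor
    · intro hm
      exact lt_of_lt_of_le (Nat.find_spec (ex r c h)) (cnt_mono q (r+1) hm)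
    · intro hm
      exact Nat.find_min' _ hm
  have tn : ∀ r c, (r, c) ∈ μ → t r c ≤ n := by
    intro r c h
    rw [ht r c h, hq.shape, ← YoungDiagram.mem_iff_lt_rowLen]; exact h
  have lat : ∀ m ≤ n, ∀ r r', r ≤ r' → cnt q (r'+1) m ≤ cnt q (r+1) m := by
    intro m hm r r' hr
    induction r', hr using Nat.le_induction with
    | base => rfl
    | succ r' _ ih =>
      have := (hq.lat m hm (r'+1) (by omega)).1
      simp only [shp_eq] at this
      have : cnt q (r'+1+1) m ≤ cnt q (r'+1) m := by exact_mod_cast this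
      omega
  refine ⟨⟨t, ?_, ?_, ?_⟩, fun r c h m hm => ht r c h m⟩
  · intro r c c' hcc h
    rw [ht r c (μ.up_left_mem le_rfl hcc.le h)]
    exact lt_trans hcc ((ht r c' h _).1 le_rfl)
  · intro r r' c hr h
    have h' := μ.up_left_mem hr.le le_rfl h
    have a := ht r' c h
    have b := tn r' c h
    generalize t r' c = m at *
    have m0 : m ≠ 0 := by
      rintro rfl
      have := (a 0).1 le_rfl
      simp [cnt_zero] at this
    obtain ⟨m, rfl⟩ : ∃ s, m = s + 1 := ⟨m - 1, by omega⟩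
    rw [Nat.lt_succ_iff, ht r c h']
    have a1 := a (m+1)
    have a2 := a m
    have l := lat (m+1) b r r' hr.le
    rw [cnt_succ] at a1
    rw [cnt_succ, cnt_succ] at l
    split_ifs at a1 l <;> omega
  · intro r c h
    simp only [t, h]; simp

theorem dCoef_words {μ : YoungDiagram} {n : ℕ} (hμ : μ.card = n) (f : Finset ℕ → Finset ℕ)
    (I : Finset ℕ) :
    Nat.card {T : SemistandardYoungTableau μ // IsStdYT n T ∧ f (sytDes n T) = I} =
    Nat.card {q : ℕ → ℕ // IsWord μ n q ∧ f (wDes n q) = I} := by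
  refine card_eq_of_rel (fun T q => Link n T.1 q.1) ?_ ?_ ?_ ?_
  · rintro ⟨T, h1, h2⟩
    obtain ⟨q, hq, hl⟩ := word_of_std hμ T h1
    exact ⟨⟨q, hq, by rw [← link_des hq hl]; exact h2⟩, hl⟩
  · rintro ⟨q, h1, h2⟩
    obtain ⟨T, hl⟩ := std_of_word q h1
    exact ⟨⟨T, link_std h1 hl, by rw [link_des h1 hl]; exact h2⟩, hl⟩
  · rintro ⟨T, h1, h2⟩ ⟨q, hq, _⟩ ⟨q', hq', _⟩ hl hl'
    simp only [Subtype.mk.injEq] at *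
    funext k
    by_cases hk : k < n
    · have a := (link_exists_iff hq hl hk _).2 rfl
      have b := (link_exists_iff hq' hl' hk _).1 a
      have c1 := (link_cell hq hk).2
      have c2 := (link_cell hq' hk).2
      simp at b
      omega
    · have a := hq.supp k
      have b := hq'.supp k
      simp [hk] at a b
      rw [a, b]
  · rintro ⟨T, h1, h2⟩ ⟨T', h1', h2'⟩ ⟨q, hq, _⟩ hl hl'
    simp only [Subtype.mk.injEq] at *
    ext r c
    by_cases h : (r, c) ∈ μ
    · have e1 := std_entries hμ h1 (r, c) (by simpa using h)
      have e2 := std_entries hμ h1' (r, c) (by simpa using h)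
      simp only [Finset.mem_Icc] at e1 e2
      have a := (hl r c h _ e1.2).1 le_rfl
      have b := (hl' r c h _ e2.2).1 le_rfl
      have a' := (hl' r c h _ e1.2).2 a
      have b' := (hl r c h _ e2.2).2 b
      omega
    · rw [T.zeros h, T'.zeros h]

/-- Transposing a standard tableau. -/
def trT {μ : YoungDiagram} (n : ℕ) (hμ : μ.card = n) (T : SemistandardYoungTableau μ)
    (hT : IsStdYT n T) : SemistandardYoungTableau μ.transpose where
  entry i j := T j i
  row_weak' := by
    intro i j1 j2 h hm
    rw [YoungDiagram.mem_transpose] at hm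
    exact (T.col_strict h hm).le
  col_strict' := by
    intro i j1 j2 h hm
    rw [YoungDiagram.mem_transpose] at hm
    exact std_row_strict hμ hT h hm
  zeros' := by
    intro i j hm
    rw [YoungDiagram.mem_transpose] at hm
    exact T.zeros hm

theorem trT_apply {μ : YoungDiagram} {n : ℕ} (hμ : μ.card = n) (T : SemistandardYoungTableau μ)
    (hT : IsStdYT n T) (i j) : trT n hμ T hT i j = T j i := rfl

theorem card_tr (μ : YoungDiagram) : μ.transpose.card = μ.card := by
  refine Finset.card_bij (fun c _ => c.swap) ?_ ?_ ?_
  · intro c hc; simpa using hc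
  · intro a _ b _ h; exact Prod.swap_injective h
  · intro b hb
    exact ⟨b.swap, by simpa using hb, by simp⟩

theorem trT_std {μ : YoungDiagram} {n : ℕ} (hμ : μ.card = n) (T : SemistandardYoungTableau μ)
    (hT : IsStdYT n T) : IsStdYT n (trT n hμ T hT) := by
  intro k hk
  rw [← hT k hk]
  refine Finset.card_bij (fun c _ => c.swap) ?_ ?_ ?_
  · intro c hc
    rw [Finset.mem_filter] at hc ⊢
    exact ⟨by simpa using hc.1, hc.2⟩
  · intro a _ b _ h; exact Prod.swap_injective h
  · intro b hb
    rw [Finset.mem_filter] at hb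
    refine ⟨b.swap, ?_, by simp⟩
    rw [Finset.mem_filter]
    exact ⟨by simpa using hb.1, hb.2⟩

theorem trT_des {μ : YoungDiagram} {n : ℕ} (hμ : μ.card = n) (T : SemistandardYoungTableau μ)
    (hT : IsStdYT n T) : sytDes n (trT n hμ T hT) = Finset.Icc 1 (n-1) \ sytDes n T := by
  ext k
  simp only [sytDes, Finset.mem_sdiff, Finset.mem_filter, not_and]
  simp only [trT_apply]
  refine and_congr_right fun hk => ?_
  have hk' := Finset.mem_Icc.1 hk
  obtain ⟨k, rfl⟩ : ∃ s, k = s + 1 := ⟨k - 1, by omega⟩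
  obtain ⟨⟨r, c⟩, hx, ex⟩ := std_exists hT k (by omega)
  obtain ⟨⟨r', c'⟩, hy, ey⟩ := std_exists hT (k+1) (by omega)
  simp only [YoungDiagram.mem_cells] at hx hy
  simp only at ex ey
  simp only [hk, forall_true_left]
  constructor
  · rintro ⟨⟨a, b⟩, h1, ⟨a', b'⟩, h2, e1, e2, hlt⟩ ⟨⟨a1, b1⟩, h3, ⟨a1', b1'⟩, h4, e3, e4, hlt'⟩
    simp only [YoungDiagram.mem_cells, YoungDiagram.mem_transpose, Prod.swap] at h1 h2
    simp only [YoungDiagram.mem_cells] at h3 h4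
    simp only at *
    have u1 := std_unique hμ hT (a1, b1) (b, a) (by simpa using h3) (by simpa using h1)
      (by simp only; omega)
    have u2 := std_unique hμ hT (a1', b1') (b', a') (by simpa using h4) (by simpa using h2)
      (by simp only; omega)
    simp only [Prod.mk.injEq] at u1 u2
    obtain ⟨rfl, rfl⟩ := u1
    obtain ⟨rfl, rfl⟩ := u2
    have m := μ.up_left_mem hlt'.le le_rfl h4
    have := std_row_strict hμ hT hlt m
    have := T.col_strict hlt' h4
    omega
  · intro hno
    refine ⟨(c, r), by simpa using hx, (c', r'), by simpa using hy, ex, ey, ?_⟩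
    by_contra hcc
    have hr : ¬ r < r' := fun h => hno ⟨(r, c), by simpa using hx, (r', c'), by simpa using hy,
      ex, ey, h⟩
    simp only at hcc
    have m := μ.up_left_mem (not_lt.1 hr) le_rfl hx
    have a := T.row_weak_of_le (not_lt.1 hcc) m
    have b := T.col_weak (not_lt.1 hr) hx
    omega

theorem tr_cast {ν μ : YoungDiagram} (e : ν = μ) {n : ℕ} (D : Finset ℕ) (F : ℕ → ℕ → ℕ)
    (S : SemistandardYoungTableau ν) (h1 : IsStdYT n S) (h2 : sytDes n S = D)
    (h3 : ∀ i j, S i j = F i j) :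
    ∃ S' : SemistandardYoungTableau μ, IsStdYT n S' ∧ sytDes n S' = D ∧ ∀ i j, S' i j = F i j := by
  subst e
  exact ⟨S, h1, h2, h3⟩

theorem dCoef_tr {μ : YoungDiagram} {n : ℕ} (hμ : μ.card = n) (I : Finset ℕ) :
    dCoef μ.transpose n I =
    Nat.card {T : SemistandardYoungTableau μ // IsStdYT n T ∧ Finset.Icc 1 (n-1) \ sytDes n T = I} := by
  symm
  have hμ' : μ.transpose.card = n := by rw [card_tr, hμ]
  refine card_eq_of_rel (fun T T' => ∀ i j, T.1 i j = T'.1 j i) ?_ ?_ ?_ ?_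
  · rintro ⟨T, h1, h2⟩
    exact ⟨⟨trT n hμ T h1, trT_std hμ T h1, by rw [trT_des]; exact h2⟩, fun i j => rfl⟩
  · rintro ⟨T, h1, h2⟩
    have s := trT_std hμ' T h1
    have d := trT_des hμ' T h1
    have a := fun i j => trT_apply hμ' T h1 i j
    generalize trT n hμ' T h1 = S at *
    obtain ⟨S, s, d, a⟩ := tr_cast (YoungDiagram.transpose_transpose μ) _ (fun i j => T j i) S s d a
    refine ⟨⟨S, s, ?_⟩, a⟩
    rw [d, ← h2, Finset.sdiff_sdiff_eq_self (show sytDes n T ⊆ Finset.Icc 1 (n-1) from Finset.filter_subset _ _)]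
  · rintro ⟨T, h1, h2⟩ ⟨S, _⟩ ⟨S', _⟩ h h'
    simp only [Subtype.mk.injEq] at *
    ext i j; rw [← h, ← h']
  · rintro ⟨S, _⟩ ⟨S', _⟩ ⟨T, h1, h2⟩ h h'
    simp only [Subtype.mk.injEq] at *
    ext i j; rw [h, h']

theorem cnt_reach (q : ℕ → ℕ) (r c m : ℕ) (h : c < cnt q r m) : ∃ k < m, q k = r ∧ cnt q r k = c := by
  induction m with
  | zero => simp [cnt_zero] at h
  | succ m ih =>
    by_cases h' : c < cnt q r m
    · obtain ⟨k, hk, h1⟩ := ih h'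
      exact ⟨k, by omega, h1⟩
    · rw [cnt_succ] at h
      split_ifs at h with hq
      · exact ⟨m, by omega, hq, by omega⟩
      · omega

theorem cnt_lt (q : ℕ → ℕ) {k m : ℕ} (h : k < m) : cnt q (q k) k < cnt q (q k) m := by
  have := cnt_mono q (q k) (show k + 1 ≤ m from h)
  rw [cnt_succ, if_pos rfl] at this
  omega

theorem lat_anti {n : ℕ} {q : ℕ → ℕ} (lat : LatW n q) (r r' : ℕ) (hr : r ≤ r') :
    cnt q (r'+1) n ≤ cnt q (r+1) n := by
  induction r', hr using Nat.le_induction with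
  | base => rfl
  | succ r' _ ih =>
    have := (lat n le_rfl (r'+1) (by omega)).1
    simp only [shp_eq] at this
    have : cnt q (r'+1+1) n ≤ cnt q (r'+1) n := by exact_mod_cast this
    omega

theorem word_shape {n : ℕ} (q : ℕ → ℕ) (supp : ∀ i, q i ≠ 0 ↔ i < n) (lat : LatW n q) :
    ∃ μ : YoungDiagram, μ.card = n ∧ IsWord μ n q := by
  have mem : ∀ r c, (r, c) ∈ (Finset.range n).image (fun k => (q k - 1, cnt q (q k) k)) ↔
      c < cnt q (r+1) n := by
    intro r c
    simp only [Finset.mem_image, Finset.mem_range, Prod.mk.injEq]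
    constructor
    · rintro ⟨k, hk, rfl, rfl⟩
      have := (supp k).2 hk
      rw [show q k - 1 + 1 = q k by omega]
      exact cnt_lt q hk
    · intro h
      obtain ⟨k, hk, h1, h2⟩ := cnt_reach q _ _ _ h
      exact ⟨k, hk, by omega, by rw [h1, h2]⟩
  refine ⟨⟨(Finset.range n).image (fun k => (q k - 1, cnt q (q k) k)), ?_⟩, ?_, supp, lat, ?_⟩
  · rintro ⟨r, c⟩ ⟨r', c'⟩ hle hx
    rw [Finset.mem_coe, mem] at hx ⊢
    have := lat_anti lat r' r hle.1
    have : c' ≤ c := hle.2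
    omega
  · refine (Finset.card_image_of_injOn ?_).trans (Finset.card_range n)
    intro a ha b hb e
    simp only [Finset.coe_range, Set.mem_Iio] at ha hb
    simp only [Prod.mk.injEq] at e
    have h1 := (supp a).2 ha
    have h2 := (supp b).2 hb
    have e1 : q a = q b := by omega
    rcases lt_trichotomy a b with h | h | h
    · have := cnt_lt q h
      rw [e1] at this e; omega
    · exact h
    · have := cnt_lt q h
      rw [e1] at e; omega
  · intro r
    apply eq_of_forall_lt_iff
    intro c
    rw [← mem, ← YoungDiagram.mem_iff_lt_rowLen]
    rfl

theorem word_shape_unique {n : ℕ} {q : ℕ → ℕ} {μ ν : YoungDiagram} (h : IsWord μ n q)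
    (h' : IsWord ν n q) : μ = ν := by
  ext ⟨r, c⟩
  rw [YoungDiagram.mem_cells, YoungDiagram.mem_cells, YoungDiagram.mem_iff_lt_rowLen,
    YoungDiagram.mem_iff_lt_rowLen, ← h.shape, ← h'.shape]

theorem Grow.fwd {n X H V H' V'} (g : Grow n X H V) (g' : Grow n X H' V') :
    ∀ j ≤ n, ∀ i < n, H i j = H' i j := by
  intro j
  induction j with
  | zero => intro _ i hi; rw [g.h0 i hi, g'.h0 i hi]
  | succ j ih =>
    intro hj
    have ih := ih (by omega)
    have vv : ∀ i ≤ n, V i j = V' i j := by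
      intro i
      induction i with
      | zero => intro _; rw [g.v0 j (by omega), g'.v0 j (by omega)]
      | succ i ih2 =>
        intro hi
        have s := g.step i (by omega) j (by omega)
        rw [ih i (by omega), ih2 (by omega), ← g'.step i (by omega) j (by omega)] at s
        exact (Prod.mk.inj s).2
    intro i hi
    have s := g.step i (by omega) j (by omega)
    rw [ih i (by omega), vv i (by omega), ← g'.step i (by omega) j (by omega)] at s
    exact (Prod.mk.inj s).1

theorem Grow.wDes {n} {ρ : Equiv.Perm (Fin n)} {H V} (g : Grow n (pX ρ) H V) (q : ℕ → ℕ)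
    (hq : ∀ i < n, H i n = q i) : _root_.wDes n q = permDes ρ := by
  unfold _root_.wDes permDes
  apply Finset.filter_congr
  intro k hk
  simp only [Finset.mem_Icc] at hk
  obtain ⟨k, rfl⟩ : ∃ s, k = s + 1 := ⟨k - 1, by omega⟩
  have n1 := (g.H_ne_iff k (by omega) n le_rfl).2 (Fin.is_lt _)
  have n2 := (g.H_ne_iff (k+1) (by omega) n le_rfl).2 (Fin.is_lt _)
  have d := g.desc k (by omega) n le_rfl n1 n2
  rw [hq _ (by omega), hq _ (by omega)] at d
  simp only [Nat.add_sub_cancel]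
  rw [d]
  exact ⟨fun h => ⟨by omega, h⟩, fun ⟨_, h⟩ => h⟩

theorem count_perms {n : ℕ} {P : Type} [Fintype P] (Y : P → YoungDiagram)
    (inj : Function.Injective Y) (sur : ∀ μ : YoungDiagram, μ.card = n → ∃ p, Y p = μ)
    (f f' : Finset ℕ → Finset ℕ) (I J : Finset ℕ) :
    Nat.card {ρ : Equiv.Perm (Fin n) // f (permDes ρ) = I ∧ f' (permDes ρ⁻¹) = J} =
    ∑ p : P, Nat.card {q : ℕ → ℕ // IsWord (Y p) n q ∧ f (wDes n q) = I} *
      Nat.card {q : ℕ → ℕ // IsWord (Y p) n q ∧ f' (wDes n q) = J} := by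
  have fin : ∀ (p : P) (h : Finset ℕ → Finset ℕ) (K : Finset ℕ),
      Finite {q : ℕ → ℕ // IsWord (Y p) n q ∧ h (wDes n q) = K} := by
    intro p h K
    have bd : ∀ q : ℕ → ℕ, IsWord (Y p) n q → ∀ i, q i < (Y p).colLen 0 + 1 := by
      intro q hq i
      by_cases hi : i < n
      · have := link_cell hq hi
        have m := (Y p).up_left_mem le_rfl (Nat.zero_le _) this.1
        rw [YoungDiagram.mem_iff_lt_colLen] at m
        omega
      · have := hq.supp i
        simp only [hi, iff_false, not_not] at this
        omega
    refine Finite.of_injective (β := Fin n → Fin ((Y p).colLen 0 + 1))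
      (fun q i => ⟨q.1 i, bd q.1 q.2.1 i⟩) ?_
    rintro ⟨q, h1, _⟩ ⟨q', h1', _⟩ e
    simp only [Subtype.mk.injEq]
    funext i
    by_cases hi : i < n
    · have := congrFun e ⟨i, hi⟩
      simpa using this
    · have a := h1.supp i
      have b := h1'.supp i
      simp only [hi, iff_false, not_not] at a b
      rw [a, b]
  simp_rw [← Nat.card_prod]
  have := fun p => fin p f I
  have := fun p => fin p f' J
  rw [← Nat.card_sigma]
  refine card_eq_of_rel (fun ρ x => ∃ H V, Grow n (pX ρ.1) H V ∧ (∀ i < n, H i n = x.2.1.1 i) ∧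
    (∀ i < n, V n i = x.2.2.1 i)) ?_ ?_ ?_ ?_
  · rintro ⟨ρ, hI, hJ⟩
    obtain ⟨H, V, g, z1, z2⟩ := grow_exists (n := n) (pX ρ)
    have gs := g.symm
    rw [← pX_inv] at gs
    have s1 : ∀ i, H i n ≠ 0 ↔ i < n := fun i =>
      ⟨fun h => by by_contra h'; exact h (z1 i (by omega)),
       fun h => (g.H_ne_iff i h n le_rfl).2 (Fin.is_lt _)⟩
    have s2 : ∀ i, V n i ≠ 0 ↔ i < n := fun i =>
      ⟨fun h => by by_contra h'; exact h (z2 i (by omega)),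
       fun h => (g.V_ne_iff i h n le_rfl).2 (Fin.is_lt _)⟩
    obtain ⟨μ, hc, hw⟩ := word_shape (fun i => H i n) s1 g.lat
    have hw' : IsWord μ n (fun j => V n j) := by
      refine ⟨s2, gs.lat, fun r => ?_⟩
      rw [← hw.shape]
      have := g.shape_eq n n (r+1) le_rfl le_rfl (by omega)
      rw [shp_eq, shp_eq] at this
      exact_mod_cast this.symm
    obtain ⟨p, rfl⟩ := sur μ hc
    refine ⟨⟨p, ⟨_, hw, ?_⟩, ⟨_, hw', ?_⟩⟩, H, V, g, fun _ _ => rfl, fun _ _ => rfl⟩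
    · rw [g.wDes _ (fun _ _ => rfl)]; exact hI
    · rw [gs.wDes _ (fun _ _ => rfl)]; exact hJ
  · rintro ⟨p, ⟨a, ha, haI⟩, ⟨b, hb, hbJ⟩⟩
    obtain ⟨ρ, H, V, g, e1, e2⟩ := grow_surj a b (fun i => (ha.supp i).2) (fun i => (hb.supp i).2)
      ha.lat hb.lat (by
        intro r hr
        obtain ⟨s, rfl⟩ : ∃ s, r = s + 1 := ⟨r - 1, by omega⟩
        rw [shp_eq, shp_eq, ha.shape, hb.shape])
    have gs := g.symm
    rw [← pX_inv] at gs
    refine ⟨⟨ρ, ?_, ?_⟩, H, V, g, e1, e2⟩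
    · rw [← g.wDes a e1]; exact haI
    · rw [← gs.wDes b e2]; exact hbJ
  · rintro ⟨ρ, hI, hJ⟩ ⟨p, ⟨a, ha, haI⟩, ⟨b, hb, hbJ⟩⟩ ⟨p', ⟨a', ha', haI'⟩, ⟨b', hb', hbJ'⟩⟩
      ⟨H, V, g, e1, e2⟩ ⟨H', V', g', e1', e2'⟩
    simp only at e1 e2 e1' e2' g g'
    have ea : a = a' := by
      funext i
      by_cases hi : i < n
      · rw [← e1 i hi, ← e1' i hi, g.fwd g' n le_rfl i hi]
      · have x := ha.supp i
        have y := ha'.supp i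
        simp only [hi, iff_false, not_not] at x y
        rw [x, y]
    have eb : b = b' := by
      funext i
      by_cases hi : i < n
      · rw [← e2 i hi, ← e2' i hi]
        exact g.symm.fwd g'.symm n le_rfl i hi
      · have x := hb.supp i
        have y := hb'.supp i
        simp only [hi, iff_false, not_not] at x y
        rw [x, y]
    subst ea eb
    obtain rfl := inj (word_shape_unique ha ha')
    rfl
  · rintro ⟨ρ, hI, hJ⟩ ⟨ρ', hI', hJ'⟩ ⟨p, ⟨a, ha, haI⟩, ⟨b, hb, hbJ⟩⟩
      ⟨H, V, g, e1, e2⟩ ⟨H', V', g', e1', e2'⟩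
    simp only [Subtype.mk.injEq]
    exact grow_unique g g' (fun i hi => (e1 i hi).trans (e1' i hi).symm)
      (fun i hi => (e2 i hi).trans (e2' i hi).symm)

/-- number of elements of `s` larger than `c`. -/
def big (s : Multiset ℕ) (c : ℕ) : ℕ := (s.filter fun a => c < a).card

theorem big_cons (a : ℕ) (s : Multiset ℕ) (c : ℕ) :
    big (a ::ₘ s) c = (if c < a then 1 else 0) + big s c := by
  unfold big
  split_ifs with h
  · rw [Multiset.filter_cons_of_pos _ h, Multiset.card_cons, add_comm]
  · rw [Multiset.filter_cons_of_neg _ h, zero_add]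

theorem big_sum (n : ℕ) (s : Multiset ℕ) (h : ∀ a ∈ s, a ≤ n) :
    ∑ c ∈ Finset.range n, big s c = s.sum := by
  induction s using Multiset.induction_on with
  | empty => simp [big]
  | cons a s ih =>
    simp only [big_cons, Finset.sum_add_distrib, Multiset.sum_cons]
    rw [ih (fun b hb => h b (Multiset.mem_cons_of_mem hb))]
    congr 1
    have ha := h a (Multiset.mem_cons_self a s)
    rw [← Finset.card_filter]
    have : (Finset.range n).filter (fun c => c < a) = Finset.range a := by
      ext c; simp only [Finset.mem_filter, Finset.mem_range]; omega
    rw [this, Finset.card_range]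

theorem big_count (s : Multiset ℕ) (c : ℕ) : big s c = big s (c+1) + s.count (c+1) := by
  induction s using Multiset.induction_on with
  | empty => simp [big]
  | cons a s ih =>
    simp only [big_cons, Multiset.count_cons, ih]
    split_ifs <;> omega

theorem big_pos (s : Multiset ℕ) (c : ℕ) (h : 0 < big s c) : ∃ a ∈ s, c < a := by
  unfold big at h
  rw [Multiset.card_pos_iff_exists_mem] at h
  obtain ⟨a, ha⟩ := h
  rw [Multiset.mem_filter] at ha
  exact ⟨a, ha⟩

theorem part_le {n : ℕ} (p : n.Partition) (a : ℕ) (h : a ∈ p.parts) : a ≤ n := by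
  have := Multiset.single_le_sum (fun _ _ => Nat.zero_le _) a h
  rw [p.parts_sum] at this
  exact this

theorem big_le {n : ℕ} (p : n.Partition) (c : ℕ) : big p.parts c ≤ n := by
  have h1 : big p.parts c ≤ p.parts.card := Multiset.card_le_card (Multiset.filter_le _ _)
  have h2 : ∀ s : Multiset ℕ, (∀ a ∈ s, 0 < a) → s.card ≤ s.sum := by
    intro s hs
    induction s using Multiset.induction_on with
    | empty => simp
    | cons a s ih =>
      have := hs a (Multiset.mem_cons_self a s)
      have := ih (fun b hb => hs b (Multiset.mem_cons_of_mem hb))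
      simp only [Multiset.card_cons, Multiset.sum_cons]; omega
  have h3 := h2 p.parts (fun a ha => p.parts_pos ha)
  rw [p.parts_sum] at h3
  omega

theorem mem_toYD {n : ℕ} (p : n.Partition) (r c : ℕ) : (r, c) ∈ toYD p ↔ r < big p.parts c := by
  have : (r, c) ∈ toYD p ↔ (r < n ∧ c < n) ∧ r < big p.parts c := by
    rw [← YoungDiagram.mem_cells]
    simp only [toYD, Finset.mem_filter, Finset.mem_product, Finset.mem_range, big]
  rw [this]
  refine ⟨fun h => h.2, fun h => ⟨⟨?_, ?_⟩, h⟩⟩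
  · have := big_le p c; omega
  · obtain ⟨a, ha, hc⟩ := big_pos p.parts c (by omega)
    have := part_le p a ha
    omega

theorem toYD_card {n : ℕ} (p : n.Partition) : (toYD p).card = n := by
  have h : (toYD p).card = ∑ c ∈ Finset.range n, big p.parts c := by
    change ((Finset.range n ×ˢ Finset.range n).filter fun c => c.1 < big p.parts c.2).card = _
    rw [Finset.card_filter, Finset.sum_product_right]
    apply Finset.sum_congr rfl
    intro c _
    rw [← Finset.card_filter]
    have : (Finset.range n).filter (fun r => r < big p.parts c) = Finset.range (big p.parts c) := by
      ext r
      have := big_le p c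
      simp only [Finset.mem_filter, Finset.mem_range]; omega
    rw [this, Finset.card_range]
  rw [h, big_sum n _ (part_le p), p.parts_sum]

theorem toYD_inj {n : ℕ} : Function.Injective (toYD (n := n)) := by
  intro p p' e
  have hb : ∀ c, big p.parts c = big p'.parts c := by
    intro c
    apply eq_of_forall_lt_iff
    intro r
    rw [← mem_toYD, ← mem_toYD, e]
  ext a
  cases a with
  | zero =>
    rw [Multiset.count_eq_zero_of_notMem, Multiset.count_eq_zero_of_notMem]
    · intro h; exact absurd (p'.parts_pos h) (lt_irrefl _)
    · intro h; exact absurd (p.parts_pos h) (lt_irrefl _)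
  | succ c =>
    have h1 := big_count p.parts c
    have h2 := big_count p'.parts c
    rw [hb, hb] at h1
    omega

theorem colLen_card (μ : YoungDiagram) (c : ℕ) :
    ((Multiset.range (μ.colLen 0)).map μ.rowLen |> fun s => big s c) = μ.colLen c := by
  simp only [big, Multiset.filter_map, Multiset.card_map]
  have : (Multiset.range (μ.colLen 0)).filter ((fun a => c < a) ∘ μ.rowLen) =
      ((Finset.range (μ.colLen 0)).filter (fun r => c < μ.rowLen r)).val := rfl
  rw [this]
  have : (Finset.range (μ.colLen 0)).filter (fun r => c < μ.rowLen r) = Finset.range (μ.colLen c) := by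
    ext r
    simp only [Finset.mem_filter, Finset.mem_range]
    rw [← YoungDiagram.mem_iff_lt_rowLen, ← YoungDiagram.mem_iff_lt_colLen,
      ← YoungDiagram.mem_iff_lt_colLen]
    exact ⟨fun h => h.2, fun h => ⟨μ.up_left_mem le_rfl (Nat.zero_le _) h, h⟩⟩
  rw [this]
  simp

theorem toYD_surj {n : ℕ} (μ : YoungDiagram) (h : μ.card = n) : ∃ p : n.Partition, toYD p = μ := by
  refine ⟨⟨(Multiset.range (μ.colLen 0)).map μ.rowLen, ?_, ?_⟩, ?_⟩
  · intro i hi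
    rw [Multiset.mem_map] at hi
    obtain ⟨r, hr, rfl⟩ := hi
    rw [Multiset.mem_range, ← YoungDiagram.mem_iff_lt_colLen, YoungDiagram.mem_iff_lt_rowLen] at hr
    exact hr
  · change ∑ r ∈ Finset.range (μ.colLen 0), μ.rowLen r = n
    rw [← h]
    symm
    unfold YoungDiagram.card
    rw [Finset.card_eq_sum_card_fiberwise (f := Prod.fst) (t := Finset.range (μ.colLen 0))]
    · apply Finset.sum_congr rfl
      intro r _
      rw [YoungDiagram.rowLen_eq_card]
      rfl
    · rintro ⟨r, c⟩ hx
      simp only [Finset.coe_range, Set.mem_Iio]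
      rw [← YoungDiagram.mem_iff_lt_colLen]
      exact μ.up_left_mem le_rfl (Nat.zero_le _) hx
  · ext ⟨r, c⟩
    rw [YoungDiagram.mem_cells, YoungDiagram.mem_cells, mem_toYD, YoungDiagram.mem_iff_lt_colLen,
      ← colLen_card μ c]

theorem sum_tr {n : ℕ} (F : YoungDiagram → ℕ) :
    ∑ p : n.Partition, F (toYD p) = ∑ p : n.Partition, F (toYD p).transpose := by
  choose t ht using fun p : n.Partition =>
    toYD_surj (toYD p).transpose ((card_tr _).trans (toYD_card p))
  have tt : ∀ p, t (t p) = p := by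
    intro p
    apply toYD_inj
    rw [ht, ht, YoungDiagram.transpose_transpose]
  refine Finset.sum_nbij' t t (by simp) (by simp) (fun p _ => tt p) (fun p _ => tt p) ?_
  intro p _
  rw [ht, YoungDiagram.transpose_transpose]

theorem permDes_anti {n : ℕ} (π₀ ρ : Equiv.Perm (Fin n))
    (hπ₀ : permDes π₀ = Finset.Icc 1 (n - 1)) :
    permDes (π₀ * ρ) = Finset.Icc 1 (n-1) \ permDes ρ := by
  have anti : StrictAnti π₀ := by
    cases n with
    | zero => intro a; exact a.elim0
    | succ m =>
      rw [Fin.strictAnti_iff_succ_lt]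
      intro i
      have : (i : ℕ) + 1 ∈ permDes π₀ := by
        rw [hπ₀, Finset.mem_Icc]; have := i.2; omega
      unfold permDes at this
      rw [Finset.mem_filter] at this
      obtain ⟨_, _, h⟩ := this
      exact h
  ext k
  simp only [permDes, Finset.mem_sdiff, Finset.mem_filter, not_and, not_exists]
  refine and_congr_right fun hk => ?_
  have hk' := Finset.mem_Icc.1 hk
  simp only [hk, forall_true_left, Equiv.Perm.mul_apply, anti.lt_iff_gt, not_lt]
  have hne : ∀ h : k < n, ρ ⟨k, h⟩ ≠ ρ ⟨k - 1, by omega⟩ := by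
    intro h e
    have := ρ.injective e
    simp only [Fin.mk.injEq] at this
    omega
  constructor
  · rintro ⟨_, h⟩ _; exact h.le
  · intro h
    have hkn : k < n := by omega
    exact ⟨hkn, lt_of_le_of_ne (h hkn) (hne hkn).symm⟩
/-- The number of pairs `(σ, τ)` of permutations of `S_n` with `στ = π₀`
(`π₀` a fixed permutation with full descent set `{1, ..., n-1}`), `Des(σ) = I` and
`Des(τ) = J` is `Σ_{λ ⊢ n} d_{λ,I} d_{λ',J}` where `λ'` is the conjugate. -/
theorem stmt7 (n : ℕ) (hn : 1 ≤ n) (I J : Finset ℕ)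
    (π₀ : Equiv.Perm (Fin n)) (hπ₀ : permDes π₀ = Finset.Icc 1 (n - 1)) :
    Nat.card {st : Equiv.Perm (Fin n) × Equiv.Perm (Fin n) //
        st.1 * st.2 = π₀ ∧ permDes st.1 = I ∧ permDes st.2 = J} =
      ∑ p : n.Partition, dCoef (toYD p) n I * dCoef (toYD p).transpose n J := by
  have h1 : Nat.card {st : Equiv.Perm (Fin n) × Equiv.Perm (Fin n) //
        st.1 * st.2 = π₀ ∧ permDes st.1 = I ∧ permDes st.2 = J} =
      Nat.card {ρ : Equiv.Perm (Fin n) // (Finset.Icc 1 (n-1) \ permDes ρ) = I ∧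
        permDes ρ⁻¹ = J} := by
    refine card_eq_of_rel (fun st ρ => st.1.2 = ρ.1⁻¹) ?_ ?_ ?_ ?_
    · rintro ⟨⟨σ, τ⟩, e, hI, hJ⟩
      simp only at e hI hJ
      refine ⟨⟨τ⁻¹, ?_, ?_⟩, ?_⟩
      · rw [← permDes_anti π₀ _ hπ₀, ← e, mul_inv_cancel_right]; exact hI
      · rw [inv_inv]; exact hJ
      · simp
    · rintro ⟨ρ, hI, hJ⟩
      refine ⟨⟨(π₀ * ρ, ρ⁻¹), ?_, ?_, hJ⟩, rfl⟩
      · simp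
      · simp only [permDes_anti π₀ _ hπ₀]; exact hI
    · rintro ⟨⟨σ, τ⟩, e, hI, hJ⟩ ⟨ρ, _⟩ ⟨ρ', _⟩ h h'
      simp only [Subtype.mk.injEq] at *
      exact inv_injective (h.symm.trans h')
    · rintro ⟨⟨σ, τ⟩, e, _⟩ ⟨⟨σ', τ'⟩, e', _⟩ ⟨ρ, _⟩ h h'
      simp only [Subtype.mk.injEq, Prod.mk.injEq] at *
      have ht : τ = τ' := h.trans h'.symm
      subst ht
      exact ⟨mul_right_cancel (e.trans e'.symm), rfl⟩
  have h2 := count_perms (toYD (n := n)) toYD_inj toYD_surj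
    (fun s => Finset.Icc 1 (n-1) \ s) id I J
  rw [h1, sum_tr (fun μ => dCoef μ n I * dCoef μ.transpose n J)]
  refine h2.trans (Finset.sum_congr rfl ?_)
  intro p _
  rw [YoungDiagram.transpose_transpose, dCoef_tr (toYD_card p),
    ← dCoef_words (toYD_card p) (fun s => Finset.Icc 1 (n-1) \ s),
    ← dCoef_words (toYD_card p) id]
  rfl
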